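/- In the progress-sequence setup, b_τ ≤ (√(τ_c) + 2·τ_q)²/n. (Second part of Lemma 2 of the paper: the final value of the potential b is at most (√τ_c + 2τ_q)²/n, with the maximum achieved when all pseudo-classical queries precede all quantum queries.) -/

import Mathlib

/-!
Write `c` and `q` for the numbers of classical and quantum steps among the first `t`. Induction on
`t` shows `n * b t ≤ (√c + 2 * q) ^ 2`. A quantum step sends `n * b` to `n * b + 4 + 4 * √(n * b)`
(that is, to `(√(n * b) + 2) ^ 2`, since `b ≥ 0`), so it raises the base of the square by at most
`2`. A classical step adds at most `1` to `n * b`, and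
`(√c + 2 * q) ^ 2 + 1 ≤ (√(c + 1) + 2 * q) ^ 2` because the cross term `4 * q * √c` is monotone
in `c`.
-/

lemma classical_step (c q : ℕ) :
    (Real.sqrt c + 2 * q) ^ 2 + 1 ≤ (Real.sqrt ((c + 1 : ℕ) : ℝ) + 2 * q) ^ 2 := by
  have h1 : Real.sqrt c ≤ Real.sqrt ((c + 1 : ℕ) : ℝ) :=
    Real.sqrt_le_sqrt (by push_cast; linarith)
  have h2 := Real.sq_sqrt (Nat.cast_nonneg (α := ℝ) c)
  have h3 := Real.sq_sqrt (Nat.cast_nonneg (α := ℝ) (c + 1))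
  have h4 := mul_le_mul_of_nonneg_left h1 (Nat.cast_nonneg (α := ℝ) q)
  push_cast at *
  nlinarith

lemma quantum_step {n x s : ℝ} (hn : 0 < n) (hs : 0 ≤ s) (h : n * x ≤ s ^ 2) :
    n * (x + 4 / n + 4 * Real.sqrt (x / n)) ≤ (s + 2) ^ 2 := by
  have h1 : Real.sqrt (x / n) ≤ s / n := by
    apply Real.sqrt_le_iff.mpr
    refine ⟨by positivity, ?_⟩
    rw [div_pow, div_le_div_iff₀ hn (by positivity)]
    nlinarith
  have h2 : n * Real.sqrt (x / n) ≤ s := by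
    rwa [le_div_iff₀ hn, mul_comm] at h1
  have h3 : n * (4 / n) = 4 := by field_simp
  nlinarith

theorem stmt_17 (n : ℝ) (hn : 0 < n) (τc τq : ℕ)
    (Tc : Finset ℕ) (hTcsub : Tc ⊆ Finset.Icc 1 (τc + τq)) (hTccard : Tc.card = τc)
    (w b : ℕ → ℝ)
    (hb0 : b 0 = 0)
    (hrec : ∀ t : ℕ, 1 ≤ t → t ≤ τc + τq →
      b t = if t ∈ Tc then b (t - 1) + 1 / n - w t
            else b (t - 1) + 4 / n + 4 * Real.sqrt (b (t - 1) / n))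
    (hw : ∀ t ∈ Tc, 0 ≤ w t ∧ w t ≤ b (t - 1)) :
    b (τc + τq) ≤ (Real.sqrt τc + 2 * τq) ^ 2 / n := by
  have key : ∀ t ≤ τc + τq, ∃ c q : ℕ, c + q = t ∧ (Tc.filter (· ≤ t)).card = c ∧
      n * b t ≤ (Real.sqrt c + 2 * q) ^ 2 := by
    intro t
    induction t with
    | zero =>
      intro _
      refine ⟨0, 0, rfl, ?_, by simp [hb0]⟩
      rw [Finset.card_eq_zero, Finset.filter_eq_empty_iff]
      intro x hx
      have := (Finset.mem_Icc.mp (hTcsub hx)).1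
      omega
    | succ t ih =>
      intro ht
      obtain ⟨c, q, hcq, hc, hb⟩ := ih (by omega)
      have hr := hrec (t + 1) (by omega) ht
      rw [Nat.add_sub_cancel] at hr
      by_cases hm : t + 1 ∈ Tc
      · refine ⟨c + 1, q, by omega, ?_, ?_⟩
        · have : Tc.filter (· ≤ t + 1) = insert (t + 1) (Tc.filter (· ≤ t)) := by
            ext x
            simp only [Finset.mem_filter, Finset.mem_insert]
            grind
          rw [this, Finset.card_insert_of_notMem (by simp), hc]
        · rw [if_pos hm] at hr
          have h1 : n * (1 / n) = 1 := by field_simp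
          have h2 := mul_nonneg hn.le (hw _ hm).1
          have h3 := classical_step c q
          rw [hr]
          linarith
      · refine ⟨c, q + 1, by omega, ?_, ?_⟩
        · rw [← hc]
          congr 1
          ext x
          simp only [Finset.mem_filter]
          grind
        · rw [if_neg hm] at hr
          have h := quantum_step hn (by positivity) hb
          rw [hr]
          refine h.trans_eq ?_
          push_cast
          ring
  obtain ⟨c, q, hcq, hc, hb⟩ := key _ le_rfl
  rw [Finset.filter_true_of_mem (fun x hx => (Finset.mem_Icc.mp (hTcsub hx)).2), hTccard] at hc
  obtain rfl := hc
  obtain rfl : q = τq := by omega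
  rwa [le_div_iff₀ hn, mul_comm]
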